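/- arXiv:1211.0414 — 3 statements merged into one kernel-verified Lean document; each statement's English description precedes it below -/
import Mathlib

section
/- Let (H,d) be a Hadamard space and y ∈ H. For every ε > 0 there exists δ > 0 such that for every bounded sequence (x_n) ⊂ H that weakly converges to a point x ∈ H and satisfies d(y,x_n) ≤ 1 for all n and limsup_{m,n→∞} d(x_m,x_n) > ε, one has d(x,y) ≤ 1 − δ. -/
open Filter Topology
open scoped Classical

/-- `γ`, restricted to `[0,1]`, is an affinely parametrized geodesic. -/
def IsGeodesic {H : Type*} [MetricSpace H] (γ : ℝ → H) : Prop :=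
  ∀ s ∈ Set.Icc (0:ℝ) 1, ∀ t ∈ Set.Icc (0:ℝ) 1,
    dist (γ s) (γ t) = |s - t| * dist (γ 0) (γ 1)

/-- A Hadamard space: a complete geodesic metric space satisfying the CAT(0) inequality. -/
structure HadamardSpace (H : Type*) [MetricSpace H] [CompleteSpace H] : Prop where
  geodesic : ∀ x y : H, ∃ γ : ℝ → H, IsGeodesic γ ∧ γ 0 = x ∧ γ 1 = y
  cat0 : ∀ (x : H) (γ : ℝ → H), IsGeodesic γ → ∀ t ∈ Set.Icc (0:ℝ) 1,
      dist x (γ t) ^ 2 ≤ (1 - t) * dist x (γ 0) ^ 2 + t * dist x (γ 1) ^ 2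
        - t * (1 - t) * dist (γ 0) (γ 1) ^ 2

/-- A set is (geodesically) convex if it contains every geodesic segment between its points. -/
def GeodesicConvex {H : Type*} [MetricSpace H] (C : Set H) : Prop :=
  ∀ γ : ℝ → H, IsGeodesic γ → γ 0 ∈ C → γ 1 ∈ C → ∀ t ∈ Set.Icc (0:ℝ) 1, γ t ∈ C

/-- A function `f : H → (−∞,∞]` is convex if it is convex along every geodesic. -/
def ConvexFun {H : Type*} [MetricSpace H] (f : H → EReal) : Prop :=
  ∀ γ : ℝ → H, IsGeodesic γ → ∀ t ∈ Set.Icc (0:ℝ) 1,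
    f (γ t) ≤ ((1 - t : ℝ) : EReal) * f (γ 0) + ((t : ℝ) : EReal) * f (γ 1)

/-- `f` is strongly convex with parameter `β > 0`. -/
def StronglyConvexWith {H : Type*} [MetricSpace H] (β : ℝ) (f : H → EReal) : Prop :=
  ∀ γ : ℝ → H, IsGeodesic γ → ∀ t ∈ Set.Icc (0:ℝ) 1,
    f (γ t) ≤ ((1 - t : ℝ) : EReal) * f (γ 0) + ((t : ℝ) : EReal) * f (γ 1)
      - ((β * (t * (1 - t)) * dist (γ 0) (γ 1) ^ 2 : ℝ) : EReal)

/-- `f : H → (−∞,∞]` is proper (not identically `∞`, never `−∞`), convex and lsc. -/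
def ProperConvexLsc {H : Type*} [MetricSpace H] (f : H → EReal) : Prop :=
  (∃ x, f x ≠ ⊤) ∧ (∀ x, f x ≠ ⊥) ∧ ConvexFun f ∧ LowerSemicontinuous f

/-- `c` is an asymptotic center of the (bounded) sequence `x`:
it minimizes `y ↦ limsup_n d(y, x_n)²`. -/
def IsAsymptoticCenter {H : Type*} [MetricSpace H] (x : ℕ → H) (c : H) : Prop :=
  ∀ y : H, limsup (fun n => dist c (x n) ^ 2) atTop ≤ limsup (fun n => dist y (x n) ^ 2) atTop

/-- `x` weakly converges to `c` if `c` is the asymptotic center of every subsequence of `x`. -/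
def WeakConvSeq {H : Type*} [MetricSpace H] (x : ℕ → H) (c : H) : Prop :=
  ∀ φ : ℕ → ℕ, StrictMono φ → IsAsymptoticCenter (x ∘ φ) c

/-- Mosco convergence of `fn` to `f`. -/
def MoscoConv {H : Type*} [MetricSpace H] (fn : ℕ → H → EReal) (f : H → EReal) : Prop :=
  (∀ (x : H) (xs : ℕ → H), Bornology.IsBounded (Set.range xs) → WeakConvSeq xs x →
      f x ≤ liminf (fun n => fn n (xs n)) atTop) ∧
  (∀ x : H, ∃ ys : ℕ → H, Tendsto ys atTop (𝓝 x) ∧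
      Tendsto (fun n => fn n (ys n)) atTop (𝓝 (f x)))

/-- `p` is the resolvent `J_λ x` of `f` at `x`: it minimizes `y ↦ f(y) + d(x,y)²/(2λ)`. -/
def IsResolventPt {H : Type*} [MetricSpace H] (f : H → EReal) (lam : ℝ) (x p : H) : Prop :=
  ∀ y : H, f p + ((dist x p ^ 2 / (2 * lam) : ℝ) : EReal)
    ≤ f y + ((dist x y ^ 2 / (2 * lam) : ℝ) : EReal)

/-- The Moreau–Yosida envelope `f_λ(x) = inf_y [f(y) + d(x,y)²/(2λ)]`. -/
noncomputable def MoreauEnv {H : Type*} [MetricSpace H] (f : H → EReal) (lam : ℝ) (x : H) :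
    EReal :=
  ⨅ y : H, f y + ((dist x y ^ 2 / (2 * lam) : ℝ) : EReal)

/-- `p` is the metric projection of `x` onto `C`. -/
def IsProjPt {H : Type*} [MetricSpace H] (C : Set H) (x p : H) : Prop :=
  p ∈ C ∧ ∀ c ∈ C, dist x p ≤ dist x c

/-- The indicator function of a set, with values in `(−∞,∞]`. -/
noncomputable def indicatorE {H : Type*} (C : Set H) : H → EReal :=
  fun x => if x ∈ C then (0 : EReal) else ⊤

/-- `y = S_t x` is the gradient-flow semigroup value:
the limit of the iterated resolvents `(J_{t/n})^{(n)} x`. -/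
def IsGradientFlowPt {H : Type*} [MetricSpace H] (J : ℝ → H → H) (t : ℝ) (x y : H) : Prop :=
  Tendsto (fun n : ℕ => (J (t / (n : ℝ)))^[n] x) atTop (𝓝 y)

/-- The squared distances from a point to the terms of a bounded sequence are bounded above. -/
lemma isBoundedUnder_dist_sq {H : Type*} [MetricSpace H] {x : ℕ → H}
    (hx : Bornology.IsBounded (Set.range x)) (z : H) :
    IsBoundedUnder (· ≤ ·) atTop (fun n => dist z (x n) ^ 2) := by
  obtain ⟨R, hR⟩ := hx.subset_closedBall z
  refine isBoundedUnder_of ⟨R ^ 2, fun n => ?_⟩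
  have h : dist (x n) z ≤ R := hR ⟨n, rfl⟩
  rw [dist_comm] at h
  exact pow_le_pow_left₀ dist_nonneg h 2

lemma isCoboundedUnder_dist_sq {H : Type*} [MetricSpace H] (x : ℕ → H) (z : H) :
    IsCoboundedUnder (· ≤ ·) atTop (fun n => dist z (x n) ^ 2) :=
  (isBoundedUnder_of ⟨0, fun _ => sq_nonneg _⟩ :
    IsBoundedUnder (· ≥ ·) atTop (fun n => dist z (x n) ^ 2)).isCoboundedUnder_le

/-- An Opial-type inequality: the asymptotic center `c` of a sequence in the closed ball of
radius `r` about `y` satisfies `limsup d(c, xₙ)² + d(c, y)² ≤ r²`. -/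
lemma IsAsymptoticCenter.limsup_add_dist_sq_le {H : Type*} [MetricSpace H] [CompleteSpace H]
    (hH : HadamardSpace H) {x : ℕ → H} {c y : H} {r : ℝ}
    (hx : Bornology.IsBounded (Set.range x)) (hc : IsAsymptoticCenter x c)
    (hy : ∀ n, dist y (x n) ≤ r) :
    limsup (fun n => dist c (x n) ^ 2) atTop + dist c y ^ 2 ≤ r ^ 2 := by
  obtain ⟨γ, hγ, rfl, rfl⟩ := hH.geodesic c y
  set L := limsup (fun n => dist (γ 0) (x n) ^ 2) atTop
  have along : ∀ t ∈ Set.Ioo (0:ℝ) 1, L + (1 - t) * dist (γ 0) (γ 1) ^ 2 ≤ r ^ 2 := by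
    intro t ht
    have key : L ≤ (1 - t) * L + t * r ^ 2 - t * (1 - t) * dist (γ 0) (γ 1) ^ 2 := by
      refine le_of_forall_pos_le_add fun η hη => ?_
      have hev : ∀ᶠ n in atTop, dist (γ 0) (x n) ^ 2 < L + η :=
        eventually_lt_of_limsup_lt (by linarith) (isBoundedUnder_dist_sq hx _)
      refine (hc (γ t)).trans (limsup_le_of_le (isCoboundedUnder_dist_sq x _) ?_)
      filter_upwards [hev] with n hn
      have h := hH.cat0 (x n) γ hγ t ⟨ht.1.le, ht.2.le⟩
      rw [dist_comm (x n), dist_comm (x n), dist_comm (x n)] at h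
      have hr : dist (γ 1) (x n) ^ 2 ≤ r ^ 2 := pow_le_pow_left₀ dist_nonneg (hy n) 2
      nlinarith [mul_le_mul_of_nonneg_left hr ht.1.le,
        mul_le_mul_of_nonneg_left hn.le (sub_nonneg.2 ht.2.le), mul_pos ht.1 hη]
    refine le_of_mul_le_mul_left ?_ ht.1
    linarith
  have hlim : Tendsto (fun t : ℝ => L + (1 - t) * dist (γ 0) (γ 1) ^ 2) (𝓝[>] 0)
      (𝓝 (L + dist (γ 0) (γ 1) ^ 2)) := by
    have hcont : Continuous fun t : ℝ => L + (1 - t) * dist (γ 0) (γ 1) ^ 2 := by fun_prop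
    simpa using (hcont.tendsto 0).mono_left nhdsWithin_le_nhds
  refine le_of_tendsto hlim ?_
  filter_upwards [Ioo_mem_nhdsGT (zero_lt_one' ℝ)] with t ht using along t ht

/-- A sequence that is not asymptotically `ε`-Cauchy stays frequently `ε / 2`-far from any point. -/
lemma frequently_half_lt_dist_of_lt_limsup {H : Type*} [MetricSpace H] {x : ℕ → H} {ε : ℝ}
    (h : ε < limsup (fun p : ℕ × ℕ => dist (x p.1) (x p.2)) atTop) (c : H) :
    ∃ᶠ n in atTop, ε / 2 < dist c (x n) := by
  intro hev
  simp only [not_lt] at hev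
  refine absurd h (not_lt.2 (limsup_le_of_le ?_ ?_))
  · exact (isBoundedUnder_of ⟨0, fun _ => dist_nonneg⟩ :
      IsBoundedUnder (· ≥ ·) atTop
        (fun p : ℕ × ℕ => dist (x p.1) (x p.2))).isCoboundedUnder_le
  · rw [← prod_atTop_atTop_eq]
    filter_upwards [hev.prod_mk hev] with p hp
    linarith [dist_triangle_left (x p.1) (x p.2) c, hp.1, hp.2]

/-- A quantified Kadec–Klee-type property of Hadamard spaces. -/
theorem hadamard_kadec_klee
    {H : Type*} [MetricSpace H] [CompleteSpace H] (hH : HadamardSpace H)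
    (y : H) (ε : ℝ) (hε : 0 < ε) :
    ∃ δ > (0:ℝ), ∀ (x : ℕ → H) (c : H),
      Bornology.IsBounded (Set.range x) → WeakConvSeq x c →
      (∀ n, dist y (x n) ≤ 1) →
      ε < limsup (fun p : ℕ × ℕ => dist (x p.1) (x p.2)) atTop →
      dist c y ≤ 1 - δ := by
  refine ⟨ε ^ 2 / 8, by positivity, fun x c hx hc hy hsep => ?_⟩
  obtain ⟨φ, hφ, hfar⟩ :=
    extraction_of_frequently_atTop (frequently_half_lt_dist_of_lt_limsup hsep c)
  have hxφ : Bornology.IsBounded (Set.range (x ∘ φ)) :=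
    hx.subset (Set.range_comp_subset_range φ x)
  have hle := (hc φ hφ).limsup_add_dist_sq_le hH hxφ (fun n => hy (φ n))
  have hge : (ε / 2) ^ 2 ≤ limsup (fun n => dist c ((x ∘ φ) n) ^ 2) atTop :=
    le_limsup_of_frequently_le
      (Frequently.of_forall fun n => pow_le_pow_left₀ (by positivity) (hfar n).le 2)
      (isBoundedUnder_dist_sq hxφ c)
  nlinarith [sq_nonneg (dist c y - 1)]
end

section
/- Let (H,d) be a Hadamard space and f : H → (−∞,∞] a convex lower semicontinuous function. Then f is sequentially weakly lower semicontinuous: for every x ∈ dom f and every bounded sequence (x_n) ⊂ H weakly converging to x, liminf_{n→∞} f(x_n) ≥ f(x). -/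
open Filter Topology
open scoped Classical

/-- Sublevel sets of a convex function at real heights are geodesically convex. -/
theorem ConvexFun.geodesicConvex_sublevel {H : Type*} [MetricSpace H] {f : H → EReal}
    (hf : ConvexFun f) (a : ℝ) : GeodesicConvex {y | f y ≤ (a : EReal)} := by
  intro γ hγ h0 h1 t ht
  have h0' : ((1 - t : ℝ) : EReal) * f (γ 0) ≤ ((1 - t : ℝ) : EReal) * (a : EReal) :=
    mul_le_mul_of_nonneg_left h0 (EReal.coe_nonneg.2 (sub_nonneg.2 ht.2))
  have h1' : (t : EReal) * f (γ 1) ≤ (t : EReal) * (a : EReal) :=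
    mul_le_mul_of_nonneg_left h1 (EReal.coe_nonneg.2 ht.1)
  refine ((hf γ hγ t ht).trans (add_le_add h0' h1')).trans_eq ?_
  rw [← EReal.coe_mul, ← EReal.coe_mul, ← EReal.coe_add]
  congr 1
  ring

/-- For a point `c` outside a closed convex set `C`, some point of `C` is uniformly closer than
`c` to all points of `C` in a given ball around `c`. -/
theorem HadamardSpace.exists_uniformly_closer {H : Type*} [MetricSpace H] [CompleteSpace H]
    (hH : HadamardSpace H) {C : Set H} (hC : GeodesicConvex C) (hcl : IsClosed C)
    (hne : C.Nonempty) {c : H} (hc : c ∉ C) {R : ℝ} (hR : 0 ≤ R) :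
    ∃ p ∈ C, ∃ δ > 0, ∀ y ∈ C, dist c y ≤ R → dist p y ^ 2 + δ ≤ dist c y ^ 2 := by
  have hD : 0 < Metric.infDist c C := (hcl.notMem_iff_infDist_pos hne).1 hc
  set D := Metric.infDist c C
  set M := (D + 1 + R) ^ 2
  have hMpos : 0 < M := by positivity
  have hD2 : 0 < D ^ 2 := by positivity
  set t := D ^ 2 / (4 * (M + D ^ 2)) with ht
  have htpos : 0 < t := by positivity
  have htM : t * (4 * (M + D ^ 2)) = D ^ 2 := by
    rw [ht]
    field_simp
  have ht1 : t < 1 := by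
    rw [ht, div_lt_one (by positivity)]
    linarith
  have hr : D < min √(D ^ 2 + t * D ^ 2 / 4) (D + 1) :=
    lt_min (Real.lt_sqrt_of_sq_lt (by linarith [mul_pos htpos hD2])) (by linarith)
  obtain ⟨p, hp, hcp⟩ := (Metric.infDist_lt_iff hne).1 hr
  have hcp2 : dist c p ^ 2 < D ^ 2 + t * D ^ 2 / 4 :=
    (Real.lt_sqrt dist_nonneg).1 (hcp.trans_le (min_le_left _ _))
  have hcp1 : dist c p < D + 1 := hcp.trans_le (min_le_right _ _)
  refine ⟨p, hp, D ^ 2 / 2, by positivity, fun y hy hyR => ?_⟩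
  obtain ⟨γ, hγ, rfl, rfl⟩ := hH.geodesic p y
  have htI : t ∈ Set.Icc (0 : ℝ) 1 := ⟨htpos.le, ht1.le⟩
  have hcat := hH.cat0 c γ hγ t htI
  have hDle : D ^ 2 ≤ dist c (γ t) ^ 2 :=
    pow_le_pow_left₀ hD.le (Metric.infDist_le_dist_of_mem (hC γ hγ hp hy t htI)) 2
  have hpy : dist (γ 0) (γ 1) ^ 2 ≤ M := by
    refine pow_le_pow_left₀ dist_nonneg ?_ 2
    linarith [dist_triangle_left (γ 0) (γ 1) c]
  have hscaled : t * (dist (γ 0) (γ 1) ^ 2 + D ^ 2 / 2) ≤ t * dist c (γ 1) ^ 2 := by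
    have h₁ := mul_le_mul_of_nonneg_left hpy (mul_pos htpos htpos).le
    have h₂ := mul_le_mul_of_nonneg_left hcp2.le (sub_pos.2 ht1).le
    have h₃ : t * (t * (4 * (M + D ^ 2))) = t * D ^ 2 := by rw [htM]
    have h₄ : 0 < t * t * D ^ 2 := by positivity
    nlinarith
  exact le_of_mul_le_mul_left hscaled htpos

/-- In a Hadamard space, a convex lsc function is sequentially weakly lower
semicontinuous. -/
theorem convex_lsc_weakly_lsc
    {H : Type*} [MetricSpace H] [CompleteSpace H] (hH : HadamardSpace H)
    (f : H → EReal) (hconv : ConvexFun f) (hlsc : LowerSemicontinuous f)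
    (c : H) (hc : f c ≠ ⊤)
    (x : ℕ → H) (hx : Bornology.IsBounded (Set.range x)) (hconv' : WeakConvSeq x c) :
    f c ≤ liminf (fun n => f (x n)) atTop := by
  by_contra! hlt
  obtain ⟨a, hla, hac⟩ := EReal.lt_iff_exists_real_btwn.1 hlt
  obtain ⟨φ, hφ, hφa⟩ := extraction_of_frequently_atTop
    (frequently_lt_of_liminf_lt (by isBoundedDefault) hla)
  obtain ⟨R, hR⟩ := hx.subset_closedBall c
  have hxR (n : ℕ) : dist c (x n) ≤ R := by
    rw [dist_comm]
    exact hR (Set.mem_range_self n)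
  obtain ⟨p, -, δ, hδ, hpδ⟩ := hH.exists_uniformly_closer
    (hconv.geodesicConvex_sublevel a) (hlsc.isClosed_preimage a)
    ⟨x (φ 0), (hφa 0).le⟩ (c := c) (not_le.2 hac) (dist_nonneg.trans (hxR 0))
  have hbdd : IsBoundedUnder (· ≤ ·) atTop (fun n => dist c ((x ∘ φ) n) ^ 2) :=
    isBoundedUnder_of ⟨R ^ 2, fun n => pow_le_pow_left₀ dist_nonneg (hxR _) 2⟩
  have hev := eventually_lt_of_limsup_lt (lt_add_of_pos_right _ (half_pos hδ)) hbdd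
  have hlim : limsup (fun n => dist p ((x ∘ φ) n) ^ 2) atTop
      ≤ limsup (fun n => dist c ((x ∘ φ) n) ^ 2) atTop - δ / 2 := by
    refine limsup_le_of_le
      (IsBoundedUnder.isCoboundedUnder_le (isBoundedUnder_of ⟨0, fun n => sq_nonneg _⟩)) ?_
    filter_upwards [hev] with n hn
    have := hpδ (x (φ n)) (hφa n).le (hxR _)
    simp only [Function.comp_apply] at hn ⊢
    linarith
  linarith [hconv' φ hφ p]
end

section
/- Let (H,d) be a Hadamard space, f : H → (−∞,∞] a proper convex lower semicontinuous function, and x₀ ∈ H. Assume there exists a sequence (λ_n) ⊂ (0,∞) with λ_n → ∞ such that the sequence (J_{λ_n} x₀) is bounded. Then J_λ x₀ converges strongly, as λ → ∞, to a minimizer of f; in particular, f attains its minimum on H. -/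
open Filter Topology
open scoped Classical

theorem IsResolventPt.ne_top {H : Type*} [MetricSpace H] {f : H → EReal} {lam : ℝ} {x p : H}
    (hp : IsResolventPt f lam x p) (hf : ∃ z, f z ≠ ⊤) : f p ≠ ⊤ := by
  obtain ⟨z, hz⟩ := hf
  intro h
  have h₁ := hp z
  rw [h, EReal.top_add_coe, top_le_iff] at h₁
  exact (EReal.add_lt_top hz (EReal.coe_ne_top _)).ne h₁

/-- Quadratic growth of the regularized functional around the resolvent point. -/
theorem IsResolventPt.add_dist_sq_le {H : Type*} [MetricSpace H] [CompleteSpace H]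
    (hH : HadamardSpace H) {f : H → EReal} (hf : ConvexFun f) (hbot : ∀ z, f z ≠ ⊥)
    {lam : ℝ} (hlam : 0 < lam) {x p q : H} (hp : IsResolventPt f lam x p)
    {u v : ℝ} (hu : f p = u) (hv : f q = v) :
    2 * lam * u + dist x p ^ 2 + dist p q ^ 2 / 2 ≤ 2 * lam * v + dist x q ^ 2 := by
  obtain ⟨γ, hγ, h0, h1⟩ := hH.geodesic p q
  have ht : (1 / 2 : ℝ) ∈ Set.Icc (0 : ℝ) 1 := by constructor <;> norm_num
  have hc := hf γ hγ _ ht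
  have hd := hH.cat0 x γ hγ _ ht
  have hm := hp (γ (1 / 2))
  rw [h0, h1] at hd
  rw [h0, h1, hu, hv] at hc
  have hfin : f (γ (1 / 2)) ≠ ⊤ := ne_top_of_le_ne_top (by exact_mod_cast EReal.coe_ne_top _) hc
  lift f (γ (1 / 2)) to ℝ using ⟨hfin, hbot _⟩ with w
  rw [hu] at hm
  norm_cast at hc hm
  have hm' : 2 * lam * u + dist x p ^ 2 ≤ 2 * lam * w + dist x (γ (1 / 2)) ^ 2 := by
    have := mul_le_mul_of_nonneg_left hm (by positivity : 0 ≤ 2 * lam)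
    field_simp at this
    linarith
  have hc' := mul_le_mul_of_nonneg_left hc (by positivity : 0 ≤ 2 * lam)
  linarith

/-- Along increasing parameters, resolvent points of `x` move away from `x`, and their mutual
distance is controlled by the increment of the squared distance to `x`. -/
theorem IsResolventPt.dist_sq_le_sub {H : Type*} [MetricSpace H] [CompleteSpace H]
    (hH : HadamardSpace H) {f : H → EReal} (hf : ProperConvexLsc f)
    {lam mu : ℝ} (hlam : 0 < lam) (hle : lam ≤ mu) {x p q : H}
    (hp : IsResolventPt f lam x p) (hq : IsResolventPt f mu x q) :
    dist p q ^ 2 ≤ 2 * (dist x q ^ 2 - dist x p ^ 2) := by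
  obtain ⟨hproper, hbot, hconv, -⟩ := hf
  obtain ⟨u, hu⟩ : ∃ u : ℝ, f p = u :=
    ⟨_, (EReal.coe_toReal (hp.ne_top hproper) (hbot p)).symm⟩
  obtain ⟨v, hv⟩ : ∃ v : ℝ, f q = v :=
    ⟨_, (EReal.coe_toReal (hq.ne_top hproper) (hbot q)).symm⟩
  have h₁ := hp.add_dist_sq_le hH hconv hbot hlam hu hv
  have h₂ := hq.add_dist_sq_le hH hconv hbot (hlam.trans_le hle) hv hu
  rw [dist_comm q p] at h₂
  have hvu : v ≤ u := by
    by_contra! hlt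
    rcases hle.eq_or_lt with rfl | hlt'
    · have hpq : p = q := by
        rw [← dist_eq_zero, ← sq_eq_zero_iff]
        linarith [sq_nonneg (dist p q)]
      subst hpq
      have : u = v := by exact_mod_cast hu.symm.trans hv
      exact hlt.ne this
    · nlinarith [sq_nonneg (dist p q), mul_pos (sub_pos.2 hlt') (sub_pos.2 hlt)]
  nlinarith [mul_nonneg hlam.le (sub_nonneg.2 hvu)]

/-- (Jost) If for some sequence `λ_n → ∞` the resolvents `J_{λ_n} x₀` are
bounded, then `J_λ x₀` converges, as `λ → ∞`, to a minimizer of `f`; in particular `f`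
attains its minimum. -/
theorem resolvent_convergence_to_minimizer
    {H : Type*} [MetricSpace H] [CompleteSpace H] (hH : HadamardSpace H)
    (f : H → EReal) (hf : ProperConvexLsc f) (x₀ : H)
    (J : ℝ → H) (hJ : ∀ lam > (0:ℝ), IsResolventPt f lam x₀ (J lam))
    (lams : ℕ → ℝ) (hpos : ∀ n, 0 < lams n) (hto : Tendsto lams atTop atTop)
    (hbd : Bornology.IsBounded (Set.range fun n => J (lams n))) :
    ∃ m : H, (∀ y : H, f m ≤ f y) ∧ Tendsto J atTop (𝓝 m) := by
  have hmono : ∀ a b : ℝ, 0 < a → a ≤ b →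
      dist (J a) (J b) ^ 2 ≤ 2 * (dist x₀ (J b) ^ 2 - dist x₀ (J a) ^ 2) := fun a b ha hab =>
    (hJ a ha).dist_sq_le_sub hH hf ha hab (hJ b (ha.trans_le hab))
  obtain ⟨R, hR⟩ := hbd.subset_closedBall x₀
  have hbound : ∀ a : ℝ, 0 < a → dist x₀ (J a) ^ 2 ≤ R ^ 2 := by
    intro a ha
    obtain ⟨n, hn⟩ := (hto.eventually_ge_atTop a).exists
    have h₁ := hmono a (lams n) ha hn
    have h₂ : dist x₀ (J (lams n)) ≤ R := Metric.mem_closedBall'.1 (hR ⟨n, rfl⟩)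
    have h₃ := pow_le_pow_left₀ dist_nonneg h₂ 2
    linarith [sq_nonneg (dist (J a) (J (lams n)))]
  have hr : ∃ l, Tendsto (fun a => dist x₀ (J a) ^ 2) atTop (𝓝 l) := by
    have hm : Monotone fun a : ℝ => dist x₀ (J (max a 1)) ^ 2 := fun a b hab => by
      have := hmono (max a 1) (max b 1) (by positivity) (max_le_max_right 1 hab)
      have := sq_nonneg (dist (J (max a 1)) (J (max b 1)))
      show dist x₀ (J (max a 1)) ^ 2 ≤ dist x₀ (J (max b 1)) ^ 2
      linarith
    refine ⟨_, (tendsto_atTop_ciSup hm ⟨R ^ 2, ?_⟩).congr' ?_⟩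
    · rintro _ ⟨a, rfl⟩
      exact hbound _ (by positivity)
    · filter_upwards [eventually_ge_atTop (1 : ℝ)] with a ha
      rw [max_eq_left ha]
  obtain ⟨l, hl⟩ := hr
  have hcauchy : Cauchy (map J atTop) := by
    rw [Metric.cauchy_iff]
    refine ⟨inferInstance, fun ε hε => ?_⟩
    have hev : ∀ᶠ a in atTop, dist (dist x₀ (J a) ^ 2) l < ε ^ 2 / 4 :=
      Metric.tendsto_nhds.1 hl _ (by positivity)
    obtain ⟨N, hN⟩ := eventually_atTop.1 (hev.and (eventually_gt_atTop (0 : ℝ)))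
    refine ⟨J '' Set.Ici N, image_mem_map (Ici_mem_atTop N), ?_⟩
    have key : ∀ a b, N ≤ a → a ≤ b → dist (J a) (J b) < ε := by
      intro a b ha hab
      obtain ⟨h₁, hapos⟩ := hN a ha
      have h₂ := (hN b (ha.trans hab)).1
      rw [Real.dist_eq, abs_lt] at h₁ h₂
      exact lt_of_pow_lt_pow_left₀ 2 hε.le (by linarith [hmono a b hapos hab])
    rintro _ ⟨a, ha, rfl⟩ _ ⟨b, hb, rfl⟩
    rcases le_total a b with hab | hab
    · exact key a b ha hab
    · rw [dist_comm]
      exact key b a hb hab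
  obtain ⟨m, hm⟩ := CompleteSpace.complete hcauchy
  refine ⟨m, fun y => ?_, hm⟩
  obtain ⟨-, hbot, -, hlsc⟩ := hf
  by_cases hy : f y = ⊤
  · rw [hy]
    exact le_top
  lift f y to ℝ using ⟨hy, hbot y⟩ with v hv
  by_contra! hlt
  obtain ⟨c, hvc, hc⟩ := EReal.lt_iff_exists_real_btwn.1 hlt
  have hlim : Tendsto (fun a : ℝ => v + dist x₀ y ^ 2 / (2 * a)) atTop (𝓝 (v + 0)) :=
    ((tendsto_id.const_mul_atTop two_pos).const_div_atTop _).const_add v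
  rw [add_zero] at hlim
  have hsmall := hlim.eventually_lt_const (EReal.coe_lt_coe_iff.1 hvc)
  obtain ⟨a, ha, hapos, hca⟩ :=
    (hsmall.and ((eventually_gt_atTop 0).and (Tendsto.eventually hm (hlsc m c hc)))).exists
  have h₁ := hJ a hapos y
  rw [← hv] at h₁
  have h₂ : f (J a) ≤ f (J a) + ((dist x₀ (J a) ^ 2 / (2 * a) : ℝ) : EReal) :=
    le_add_of_nonneg_right (by exact_mod_cast (by positivity : 0 ≤ dist x₀ (J a) ^ 2 / (2 * a)))
  have h₃ := (hca.trans_le h₂).trans_le h₁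
  norm_cast at h₃
  exact h₃.not_gt ha
end
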